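/- Let $f=\sum_{v\in\mathbb{Z}_{\ge 0}^n} a_v x^v\in\mathbb{C}[x_1,\dots,x_n]$ and let its Newton polyhedron at infinity $\Gamma_\infty(f)$ be the convex hull of $\{0\}\cup\{v : a_v\neq 0\}$ in $\mathbb{R}^n$. For $u\in\mathbb{R}^n$ let $\gamma_u=\{v\in\Gamma_\infty(f) : \langle u,v\rangle=\min_{w\in\Gamma_\infty(f)}\langle u,w\rangle\}$. A face of $\Gamma_\infty(f)$ is a subset of the form $\gamma_u$ with $u\in\mathbb{R}^n$, its dimension is that of its affine span, and a facet is a face of dimension $n-1$. A face $\gamma$ with $0\in\gamma$ is called atypical if there is a facet $\Gamma\supseteq\gamma$ such that every nonzero $u\in\mathbb{R}^n$ with $\gamma_u=\Gamma$ lies outside the first quadrant $\mathbb{R}_{\ge 0}^n$. For a face $\gamma$, let $\sigma(\gamma)$ be the closure in $\mathbb{R}^n$ of $\{u\in\mathbb{R}^n : \gamma_u=\gamma\}$, i.e. the cone corresponding to $\gamma$ in the dual fan of $\Gamma_\infty(f)$. Assume that $\dim\Gamma_\infty(f)=n$ and let $\gamma$ be a face of $\Gamma_\infty(f)$ with $0\in\gamma$.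 Then $\gamma$ is atypical if and only if $\sigma(\gamma)$ is not contained in $\mathbb{R}_{\ge 0}^n$. -/

import Mathlib

noncomputable section

/-- The support of a polynomial, viewed as a subset of `ℝⁿ`. -/
def realSupp {n : ℕ} (f : MvPolynomial (Fin n) ℂ) : Set (Fin n → ℝ) :=
  (fun v : Fin n →₀ ℕ => fun i => (v i : ℝ)) '' {v | MvPolynomial.coeff v f ≠ 0}

/-- The Newton polyhedron at infinity `Γ_∞(f)`. -/
def NPinf {n : ℕ} (f : MvPolynomial (Fin n) ℂ) : Set (Fin n → ℝ) :=
  convexHull ℝ ({0} ∪ realSupp f)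

/-- The supporting face `γ_u` of `u` in `Γ_∞(f)`: the points of `Γ_∞(f)` at which the
linear form `⟨u, ·⟩` attains its minimum over `Γ_∞(f)`. -/
def suppFace {n : ℕ} (f : MvPolynomial (Fin n) ℂ) (u : Fin n → ℝ) : Set (Fin n → ℝ) :=
  {v | v ∈ NPinf f ∧ ∀ w ∈ NPinf f, dotProduct u v ≤ dotProduct u w}

/-- A face of `Γ_∞(f)` is any set of the form `γ_u`. -/
def IsFaceOf {n : ℕ} (f : MvPolynomial (Fin n) ℂ) (γ : Set (Fin n → ℝ)) : Prop :=
  ∃ u : Fin n → ℝ, suppFace f u = γ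

/-- Dimension of a (nonempty) subset of `ℝⁿ`: the dimension of its affine span. -/
def setDim {n : ℕ} (s : Set (Fin n → ℝ)) : ℕ :=
  Module.finrank ℝ (affineSpan ℝ s).direction

/-- A facet of `Γ_∞(f)` is a face of dimension `n - 1`, an integer subtraction, hence written
additively: for `n = 0` there are no facets. -/
def IsFacetOf {n : ℕ} (f : MvPolynomial (Fin n) ℂ) (Γ : Set (Fin n → ℝ)) : Prop :=
  IsFaceOf f Γ ∧ setDim Γ + 1 = n

/-- The first quadrant `ℝ_{≥0}ⁿ`. -/
def firstQuadrant (n : ℕ) : Set (Fin n → ℝ) := {u | ∀ i, 0 ≤ u i}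

/-- A face `γ` of `Γ_∞(f)` with `0 ∈ γ` is atypical if some facet of `Γ_∞(f)`
containing `γ` has all its nonzero inner conormal vectors outside `ℝ_{≥0}ⁿ`. -/
def IsAtypicalFace {n : ℕ} (f : MvPolynomial (Fin n) ℂ) (γ : Set (Fin n → ℝ)) : Prop :=
  IsFaceOf f γ ∧ (0 : Fin n → ℝ) ∈ γ ∧
    ∃ Γ : Set (Fin n → ℝ), IsFacetOf f Γ ∧ γ ⊆ Γ ∧
      ∀ u : Fin n → ℝ, u ≠ 0 → suppFace f u = Γ → u ∉ firstQuadrant n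

/-- The cone `σ(γ)` of the dual fan of `Γ_∞(f)` corresponding to the face `γ`. -/
def sigmaCone {n : ℕ} (f : MvPolynomial (Fin n) ℂ) (γ : Set (Fin n → ℝ)) : Set (Fin n → ℝ) :=
  closure {u : Fin n → ℝ | suppFace f u = γ}

end

section LinearForms

variable {n : ℕ}

lemma dotProduct_eq_zero_of_mem_span {u : Fin n → ℝ} {s : Set (Fin n → ℝ)}
    (h : ∀ v ∈ s, u ⬝ᵥ v = 0) {v : Fin n → ℝ} (hv : v ∈ Submodule.span ℝ s) : u ⬝ᵥ v = 0 := by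
  induction hv using Submodule.span_induction with
  | mem x hx => exact h x hx
  | zero => simp
  | add x y _ _ hx hy => rw [dotProduct_add, hx, hy, add_zero]
  | smul a x _ hx => rw [dotProduct_smul, hx, smul_zero]

lemma eq_zero_of_dotProduct_eq_zero_of_span_eq_top {u : Fin n → ℝ} {s : Set (Fin n → ℝ)}
    (hs : Submodule.span ℝ s = ⊤) (h : ∀ v ∈ s, u ⬝ᵥ v = 0) : u = 0 :=
  dotProduct_eq_zero u fun _ => dotProduct_eq_zero_of_mem_span h (hs ▸ Submodule.mem_top)

lemma exists_dotProduct_eq_zero_of_ne_top {V : Submodule ℝ (Fin n → ℝ)} (hV : V ≠ ⊤) :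
    ∃ w : Fin n → ℝ, w ≠ 0 ∧ ∀ v ∈ V, w ⬝ᵥ v = 0 := by
  obtain ⟨φ, hφ, hle⟩ := Submodule.exists_le_ker_of_lt_top V hV.lt_top
  have key : ∀ v, (fun j => φ (Pi.single j 1)) ⬝ᵥ v = φ v := by
    intro v
    conv_rhs => rw [pi_eq_sum_univ' v]
    simp [dotProduct, map_sum, mul_comm, Pi.single]
  refine ⟨fun j => φ (Pi.single j 1), fun h => hφ ?_, fun v hv => ?_⟩
  · refine LinearMap.ext fun v => ?_
    rw [← key, h, zero_dotProduct, LinearMap.zero_apply]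
  · rw [key]
    exact hle hv

/-- A hyperplane annihilated by a vector with nonzero `i`-th coordinate is complemented by
the `i`-th basis vector. -/
lemma eq_zero_of_dotProduct_eq_zero_of_apply_eq_zero {V : Submodule ℝ (Fin n → ℝ)}
    (hV : Module.finrank ℝ V + 1 = n) {u w : Fin n → ℝ} {i : Fin n} (hui : u i ≠ 0)
    (hu : ∀ v ∈ V, u ⬝ᵥ v = 0) (hw : ∀ v ∈ V, w ⬝ᵥ v = 0) (hwi : w i = 0) : w = 0 := by
  have hlt : V < V ⊔ Submodule.span ℝ {Pi.single i 1} := by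
    refine lt_of_le_of_ne le_sup_left fun h => hui ?_
    have hmem : (Pi.single i 1 : Fin n → ℝ) ∈ V := by
      rw [h]
      exact Submodule.mem_sup_right (Submodule.mem_span_singleton_self _)
    simpa using hu _ hmem
  have htop : V ⊔ Submodule.span ℝ {Pi.single i 1} = ⊤ := by
    apply Submodule.eq_top_of_finrank_eq
    have h1 := Submodule.finrank_lt_finrank_of_lt hlt
    have h2 := (V ⊔ Submodule.span ℝ {(Pi.single i 1 : Fin n → ℝ)}).finrank_le
    rw [Module.finrank_fin_fun] at h2 ⊢
    omega
  refine dotProduct_eq_zero w fun v => ?_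
  have hv : v ∈ V ⊔ Submodule.span ℝ {(Pi.single i 1 : Fin n → ℝ)} := htop ▸ Submodule.mem_top
  obtain ⟨a, ha, b, hb, rfl⟩ := Submodule.mem_sup.1 hv
  obtain ⟨c, rfl⟩ := Submodule.mem_span_singleton.1 hb
  simp [dotProduct_add, hw a ha, hwi]

lemma exists_dotProduct_eq_zero_and_apply_eq_zero {V : Submodule ℝ (Fin n → ℝ)}
    (hV : Module.finrank ℝ V + 1 < n) (i : Fin n) :
    ∃ w : Fin n → ℝ, w ≠ 0 ∧ (∀ v ∈ V, w ⬝ᵥ v = 0) ∧ w i = 0 := by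
  have hne : V ⊔ Submodule.span ℝ {(Pi.single i 1 : Fin n → ℝ)} ≠ ⊤ := by
    intro h
    have h1 := Submodule.finrank_add_le_finrank_add_finrank V
      (Submodule.span ℝ {(Pi.single i 1 : Fin n → ℝ)})
    rw [h, finrank_top, Module.finrank_fin_fun, finrank_span_singleton (by simp)] at h1
    omega
  obtain ⟨w, hw0, hw⟩ := exists_dotProduct_eq_zero_of_ne_top hne
  refine ⟨w, hw0, fun v hv => hw v (Submodule.mem_sup_left hv), ?_⟩
  simpa using hw _ (Submodule.mem_sup_right (Submodule.mem_span_singleton_self _))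

/-- Moving a linear form nonnegative on a finite set in a direction that is negative somewhere
on the set, until a new point of the set is annihilated. -/
lemma exists_nonneg_add_smul_dotProduct {S : Set (Fin n → ℝ)} (hS : S.Finite)
    {u w : Fin n → ℝ} (hu : ∀ s ∈ S, 0 ≤ u ⬝ᵥ s) (hw : ∃ s ∈ S, w ⬝ᵥ s < 0) :
    ∃ t : ℝ, (∀ s ∈ S, 0 ≤ (u + t • w) ⬝ᵥ s) ∧ ∃ s ∈ S, w ⬝ᵥ s ≠ 0 ∧ (u + t • w) ⬝ᵥ s = 0 := by
  obtain ⟨s₀, ⟨hs₀, hneg⟩, hmin⟩ := Set.exists_min_image {s ∈ S | w ⬝ᵥ s < 0}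
    (fun s => u ⬝ᵥ s / -(w ⬝ᵥ s)) (hS.subset (Set.sep_subset _ _)) hw
  have ht : 0 ≤ u ⬝ᵥ s₀ / -(w ⬝ᵥ s₀) := div_nonneg (hu s₀ hs₀) (by linarith)
  refine ⟨u ⬝ᵥ s₀ / -(w ⬝ᵥ s₀), fun s hs => ?_, s₀, hs₀, hneg.ne, ?_⟩
  · rw [add_dotProduct, smul_dotProduct, smul_eq_mul]
    rcases lt_or_ge (w ⬝ᵥ s) 0 with h | h
    · have := hmin s ⟨hs, h⟩
      rw [le_div_iff₀ (by linarith)] at this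
      linarith
    · have := mul_nonneg ht h
      linarith [hu s hs]
  · rw [add_dotProduct, smul_dotProduct, smul_eq_mul]
    have := hneg.ne
    field_simp
    ring

end LinearForms

section NewtonPolyhedron

variable {n : ℕ} {f : MvPolynomial (Fin n) ℂ}

lemma realSupp_finite (f : MvPolynomial (Fin n) ℂ) : (realSupp f).Finite := by
  refine Set.Finite.image _ (f.support.finite_toSet.subset fun v hv => ?_)
  simpa using hv

lemma zero_mem_NPinf (f : MvPolynomial (Fin n) ℂ) : (0 : Fin n → ℝ) ∈ NPinf f :=
  subset_convexHull ℝ _ (Or.inl rfl)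

lemma realSupp_subset_NPinf (f : MvPolynomial (Fin n) ℂ) : realSupp f ⊆ NPinf f :=
  fun _ hs => subset_convexHull ℝ _ (Or.inr hs)

lemma NPinf_nonneg_of_realSupp_nonneg {u : Fin n → ℝ} (h : ∀ s ∈ realSupp f, 0 ≤ u ⬝ᵥ s) :
    ∀ v ∈ NPinf f, 0 ≤ u ⬝ᵥ v := by
  have hconv : Convex ℝ {v : Fin n → ℝ | 0 ≤ u ⬝ᵥ v} :=
    convex_halfSpace_ge (f := fun v => u ⬝ᵥ v)
      ⟨fun x y => dotProduct_add u x y, fun c x => dotProduct_smul c u x⟩ 0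
  refine fun v hv => convexHull_min ?_ hconv hv
  rintro s (rfl | hs)
  · simp
  · exact h s hs

lemma setDim_eq_finrank_span {s : Set (Fin n → ℝ)} (h : (0 : Fin n → ℝ) ∈ s) :
    setDim s = Module.finrank ℝ (Submodule.span ℝ s) := by
  have himage : (fun x : Fin n → ℝ => x -ᵥ 0) '' s = s := by
    ext x
    simp
  rw [setDim, direction_affineSpan, vectorSpan_eq_span_vsub_set_right ℝ h, himage]

lemma span_NPinf_eq_top (hdim : setDim (NPinf f) = n) : Submodule.span ℝ (NPinf f) = ⊤ := by
  apply Submodule.eq_top_of_finrank_eq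
  rw [← setDim_eq_finrank_span (zero_mem_NPinf f), hdim, Module.finrank_fin_fun]

lemma span_realSupp_eq_top (hdim : setDim (NPinf f) = n) :
    Submodule.span ℝ (realSupp f) = ⊤ := by
  rw [eq_top_iff, ← span_NPinf_eq_top hdim, Submodule.span_le]
  refine convexHull_min ?_ (Submodule.convex _)
  rintro s (rfl | hs)
  · exact Submodule.zero_mem _
  · exact Submodule.subset_span hs

lemma zero_mem_suppFace_iff {u : Fin n → ℝ} :
    (0 : Fin n → ℝ) ∈ suppFace f u ↔ ∀ v ∈ NPinf f, 0 ≤ u ⬝ᵥ v := by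
  simp [suppFace, zero_mem_NPinf]

lemma mem_suppFace_iff_of_zero_mem {u v : Fin n → ℝ} (h : (0 : Fin n → ℝ) ∈ suppFace f u) :
    v ∈ suppFace f u ↔ v ∈ NPinf f ∧ u ⬝ᵥ v = 0 := by
  rw [zero_mem_suppFace_iff] at h
  refine ⟨fun hv => ⟨hv.1, le_antisymm ?_ (h v hv.1)⟩, fun hv => ⟨hv.1, fun w hw => ?_⟩⟩
  · simpa using hv.2 0 (zero_mem_NPinf f)
  · rw [hv.2]
    exact h w hw

lemma suppFace_zero (f : MvPolynomial (Fin n) ℂ) : suppFace f 0 = NPinf f := by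
  simp [suppFace]

lemma suppFace_add_smul {u v : Fin n → ℝ} {ε : ℝ} (hε : 0 < ε)
    (hne : (suppFace f u ∩ suppFace f v).Nonempty) :
    suppFace f (u + ε • v) = suppFace f u ∩ suppFace f v := by
  obtain ⟨p, hpu, hpv⟩ := hne
  ext x
  simp only [suppFace, Set.mem_inter_iff, Set.mem_ofPred_eq, add_dotProduct, smul_dotProduct,
    smul_eq_mul] at hpu hpv ⊢
  constructor
  · rintro ⟨hx, h⟩
    have hp := h p hpu.1
    have h1 := hpu.2 x hx
    have h2 := mul_le_mul_of_nonneg_left (hpv.2 x hx) hε.le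
    have h3 : v ⬝ᵥ x ≤ v ⬝ᵥ p := le_of_mul_le_mul_left (by linarith) hε
    exact ⟨⟨hx, fun w hw => by linarith [hpu.2 w hw]⟩,
      ⟨hx, fun w hw => by linarith [hpv.2 w hw]⟩⟩
  · rintro ⟨⟨hx, h1⟩, -, h2⟩
    exact ⟨hx, fun w hw => add_le_add (h1 w hw) (mul_le_mul_of_nonneg_left (h2 w hw) hε.le)⟩

/-- Conormal vectors of faces containing a nonempty face `γ` lie in the cone of `γ`. -/
lemma mem_sigmaCone_of_subset_suppFace {γ : Set (Fin n → ℝ)} (hγ : IsFaceOf f γ)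
    (hne : γ.Nonempty) {u : Fin n → ℝ} (hu : γ ⊆ suppFace f u) : u ∈ sigmaCone f γ := by
  obtain ⟨v, rfl⟩ := hγ
  have hlim : Filter.Tendsto (fun ε : ℝ => u + ε • v) (nhdsWithin 0 (Set.Ioi 0)) (nhds u) := by
    have hc : Continuous fun ε : ℝ => u + ε • v := by fun_prop
    simpa using (hc.tendsto 0).mono_left nhdsWithin_le_nhds
  refine mem_closure_of_tendsto hlim ?_
  filter_upwards [self_mem_nhdsWithin] with ε hε
  have hinter : suppFace f u ∩ suppFace f v = suppFace f v := Set.inter_eq_right.2 hu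
  change suppFace f (u + ε • v) = suppFace f v
  rw [suppFace_add_smul hε (hinter.symm ▸ hne), hinter]

lemma isClosed_firstQuadrant (n : ℕ) : IsClosed (firstQuadrant n) := by
  simp only [firstQuadrant, Set.ofPred_forall]
  exact isClosed_iInter fun i => isClosed_le continuous_const (continuous_apply i)

/-- If `γ_u` contains the origin and has codimension at least two, then `u` can be moved, fixing
its `i`-th coordinate, so that its supporting face becomes strictly larger in dimension. -/
lemma exists_setDim_suppFace_lt (hdim : setDim (NPinf f) = n) {u : Fin n → ℝ}
    (h0 : (0 : Fin n → ℝ) ∈ suppFace f u) (i : Fin n) (hlt : setDim (suppFace f u) + 1 < n) :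
    ∃ u' : Fin n → ℝ, u' i = u i ∧ suppFace f u ⊆ suppFace f u' ∧
      setDim (suppFace f u) < setDim (suppFace f u') := by
  rw [setDim_eq_finrank_span h0] at hlt
  have hdir : ∃ w : Fin n → ℝ, (∀ v ∈ Submodule.span ℝ (suppFace f u), w ⬝ᵥ v = 0) ∧ w i = 0 ∧
      ∃ s ∈ realSupp f, w ⬝ᵥ s < 0 := by
    obtain ⟨w, hw0, hwV, hwi⟩ := exists_dotProduct_eq_zero_and_apply_eq_zero hlt i
    by_cases hneg : ∃ s ∈ realSupp f, w ⬝ᵥ s < 0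
    · exact ⟨w, hwV, hwi, hneg⟩
    · refine ⟨-w, fun v hv => by simp [hwV v hv], by simp [hwi], ?_⟩
      by_contra hpos
      push Not at hneg hpos
      refine hw0 (eq_zero_of_dotProduct_eq_zero_of_span_eq_top (span_realSupp_eq_top hdim)
        fun s hs => le_antisymm ?_ (hneg s hs))
      simpa using hpos s hs
  obtain ⟨w, hwV, hwi, hneg⟩ := hdir
  have hu := zero_mem_suppFace_iff.1 h0
  obtain ⟨t, hnonneg, s, hs, hws, hts⟩ := exists_nonneg_add_smul_dotProduct (realSupp_finite f)
    (fun s hs => hu s (realSupp_subset_NPinf f hs)) hneg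
  have h0' : (0 : Fin n → ℝ) ∈ suppFace f (u + t • w) :=
    zero_mem_suppFace_iff.2 (NPinf_nonneg_of_realSupp_nonneg hnonneg)
  have hsub : suppFace f u ⊆ suppFace f (u + t • w) := by
    intro v hv
    obtain ⟨hvP, huv⟩ := (mem_suppFace_iff_of_zero_mem h0).1 hv
    refine (mem_suppFace_iff_of_zero_mem h0').2 ⟨hvP, ?_⟩
    simp [add_dotProduct, huv, hwV v (Submodule.subset_span hv)]
  refine ⟨u + t • w, by simp [hwi], hsub, ?_⟩
  rw [setDim_eq_finrank_span h0, setDim_eq_finrank_span h0']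
  refine Submodule.finrank_lt_finrank_of_lt (lt_of_le_of_ne (Submodule.span_mono hsub) fun h => ?_)
  have hmem : s ∈ suppFace f (u + t • w) :=
    (mem_suppFace_iff_of_zero_mem h0').2 ⟨realSupp_subset_NPinf f hs, hts⟩
  exact hws (hwV s (h ▸ Submodule.subset_span hmem))

lemma setDim_suppFace_lt {u : Fin n → ℝ} (hu : u ≠ 0)
    (h0 : (0 : Fin n → ℝ) ∈ suppFace f u) : setDim (suppFace f u) < n := by
  rw [setDim_eq_finrank_span h0]
  have hne : Submodule.span ℝ (suppFace f u) ≠ ⊤ := fun h =>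
    hu (eq_zero_of_dotProduct_eq_zero_of_span_eq_top h fun v hv =>
      ((mem_suppFace_iff_of_zero_mem h0).1 hv).2)
  simpa using Submodule.finrank_lt hne

/-- A vector whose supporting face contains the origin can be moved, fixing a nonzero `i`-th
coordinate, to a conormal vector of a facet containing that face. -/
lemma exists_isFacetOf_suppFace (hdim : setDim (NPinf f) = n) {i : Fin n} {u : Fin n → ℝ}
    (hui : u i ≠ 0) (h0 : (0 : Fin n → ℝ) ∈ suppFace f u) :
    ∃ u' : Fin n → ℝ, u' i = u i ∧ suppFace f u ⊆ suppFace f u' ∧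
      IsFacetOf f (suppFace f u') := by
  obtain ⟨k, hk⟩ : ∃ k, n ≤ setDim (suppFace f u) + 1 + k := ⟨n, by omega⟩
  induction k generalizing u with
  | zero =>
    have := setDim_suppFace_lt (fun h => hui (by simp [h])) h0
    exact ⟨u, rfl, subset_rfl, ⟨u, rfl⟩, by omega⟩
  | succ k ih =>
    by_cases hlt : setDim (suppFace f u) + 1 < n
    · obtain ⟨u₁, hi, hsub, hd⟩ := exists_setDim_suppFace_lt hdim h0 i hlt
      obtain ⟨u₂, hi₂, hsub₂, hfac⟩ := ih (hi ▸ hui) (hsub h0) (by omega)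
      exact ⟨u₂, hi₂.trans hi, hsub.trans hsub₂, hfac⟩
    · exact ih hui h0 (by omega)

/-- If one conormal vector of a facet through the origin has a negative coordinate, then so does
every nonzero conormal vector of it. -/
lemma notMem_firstQuadrant_of_isFacetOf (hdim : setDim (NPinf f) = n) {u u' : Fin n → ℝ}
    {i : Fin n} (hui : u i < 0) (h0 : (0 : Fin n → ℝ) ∈ suppFace f u)
    (hfac : IsFacetOf f (suppFace f u)) (hu' : u' ≠ 0) (heq : suppFace f u' = suppFace f u) :
    u' ∉ firstQuadrant n := by
  intro hq
  have h0' : (0 : Fin n → ℝ) ∈ suppFace f u' := heq ▸ h0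
  have hc : 0 ≤ -(u' i / u i) := by
    rw [← div_neg]
    exact div_nonneg (hq i) (by linarith)
  have hV : ∀ v ∈ Submodule.span ℝ (suppFace f u), u ⬝ᵥ v = 0 := fun v =>
    dotProduct_eq_zero_of_mem_span fun w hw => ((mem_suppFace_iff_of_zero_mem h0).1 hw).2
  have hV' : ∀ v ∈ Submodule.span ℝ (suppFace f u), u' ⬝ᵥ v = 0 := fun v =>
    dotProduct_eq_zero_of_mem_span fun w hw =>
      ((mem_suppFace_iff_of_zero_mem h0').1 (heq ▸ hw)).2
  have hrank := hfac.2
  rw [setDim_eq_finrank_span h0] at hrank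
  have hzero : u' + (-(u' i / u i)) • u = 0 := by
    refine eq_zero_of_dotProduct_eq_zero_of_apply_eq_zero hrank hui.ne hV (fun v hv => ?_) ?_
    · simp [add_dotProduct, hV v hv, hV' v hv]
    · have := hui.ne
      simp only [Pi.add_apply, Pi.smul_apply, smul_eq_mul]
      field_simp
      ring
  refine hu' (eq_zero_of_dotProduct_eq_zero_of_span_eq_top (span_NPinf_eq_top hdim) fun v hv => ?_)
  have h1 := zero_mem_suppFace_iff.1 h0 v hv
  have h2 := zero_mem_suppFace_iff.1 h0' v hv
  have h3 : u' ⬝ᵥ v + -(u' i / u i) * (u ⬝ᵥ v) = 0 := by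
    rw [← smul_eq_mul, ← smul_dotProduct, ← add_dotProduct, hzero, zero_dotProduct]
  linarith [mul_nonneg hc h1]

end NewtonPolyhedron

theorem atypical_iff_sigmaCone_not_subset_quadrant {n : ℕ} (f : MvPolynomial (Fin n) ℂ)
    (hdim : setDim (NPinf f) = n) (γ : Set (Fin n → ℝ))
    (hγ : IsFaceOf f γ) (h0 : (0 : Fin n → ℝ) ∈ γ) :
    IsAtypicalFace f γ ↔ ¬ sigmaCone f γ ⊆ firstQuadrant n := by
  constructor
  · rintro ⟨-, -, Γ, ⟨⟨u, rfl⟩, hrank⟩, hsub, hout⟩ hσ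
    have hu : u ≠ 0 := by
      rintro rfl
      rw [suppFace_zero, hdim] at hrank
      omega
    exact hout u hu rfl (hσ (mem_sigmaCone_of_subset_suppFace hγ ⟨0, h0⟩ hsub))
  · intro hσ
    obtain ⟨u, rfl, huq⟩ : ∃ u, suppFace f u = γ ∧ u ∉ firstQuadrant n := by
      by_contra! h
      exact hσ (closure_minimal h (isClosed_firstQuadrant n))
    obtain ⟨i, hi⟩ : ∃ i, u i < 0 := by simpa [firstQuadrant] using huq
    obtain ⟨u', hi', hsub, hfac⟩ := exists_isFacetOf_suppFace hdim hi.ne h0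
    exact ⟨hγ, h0, _, hfac, hsub, fun w hw heq =>
      notMem_firstQuadrant_of_isFacetOf hdim (hi' ▸ hi) (hsub h0) hfac hw heq⟩
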